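/- In the mod-2 Steenrod algebra A, the subalgebra A_1 generated (over ℤ/2) by the elements Sq^1 and Sq^2 is an 8-dimensional ℤ/2-vector space. -/

import Mathlib

/-!
Write `1`, `2` for `Sq 1`, `Sq 2`. The Adem relations give `11 = 0`, `12 = Sq 3` and `22 = 121`,
hence `1212 = 222 = 2121`. So the span of the eight words `∅, 1, 2, 12, 21, 121, 212, 1212` is
stable under left multiplication by `Sq 1` and `Sq 2`, and therefore equals `A_1`.

For linear independence it is enough to find a module over the whole Steenrod algebra with a vector
that these eight words send to linearly independent vectors. The eight-dimensional space with the
words as basis is such a module: the action of `Sq 1` and `Sq 2` by left multiplication extends to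
all `Sq k`. This is one of the known `A`-module structures on `A_1`. Since the module is
concentrated in degrees `0` to `6`, Adem relations of degree above `6` hold because every term
vanishes, and only finitely many relations remain to be checked.
-/

open scoped TensorProduct

noncomputable section

/-- The field `ℤ/2`. -/
abbrev F2 := ZMod 2

/-- The generator `Sq^k` in the free algebra over `ℤ/2` on generators indexed by `ℕ`. -/
def preSq (k : ℕ) : FreeAlgebra F2 ℕ := FreeAlgebra.ι F2 k

/-- The relations of the Adem presentation of the mod-2 Steenrod algebra. -/
inductive AdemRel : FreeAlgebra F2 ℕ → FreeAlgebra F2 ℕ → Prop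
  | sq_zero : AdemRel (preSq 0) 1
  | adem (a b : ℕ) (ha : 0 < a) (hab : a < 2 * b) :
      AdemRel (preSq a * preSq b)
        (∑ c ∈ Finset.range (a / 2 + 1),
          ((Nat.choose (b - c - 1) (a - 2 * c) : F2)) • (preSq (a + b - c) * preSq c))

/-- The mod-2 Steenrod algebra, presented by the Adem relations. -/
abbrev SteenrodAlgebra := RingQuot AdemRel

/-- The image of the generator `Sq^k` in the Steenrod algebra. -/
def Sq (k : ℕ) : SteenrodAlgebra := RingQuot.mkAlgHom F2 AdemRel (preSq k)

/-- The action of `Sq k` on the basis of the eight-dimensional module: `none` is the zero vector,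
and the indices `0, …, 7` stand for `∅, 1, 2, 12, 21, 121, 212, 1212`, which have degrees
`0, 1, 2, 3, 3, 4, 5, 6`. The operations `Sq 1` and `Sq 2` act by left multiplication in `A_1`.
The Adem relation for `Sq 2 * Sq 3` forces `Sq 4` to send `1` to `212`; its values on `∅` and on
`2` are free, and both are taken to be zero. -/
def sqAct : ℕ → Fin 8 → Option (Fin 8)
  | 0 => some
  | 1 => ![some 1, none, some 3, none, some 5, none, some 7, none]
  | 2 => ![some 2, some 4, some 5, some 6, none, some 7, none, none]
  | 3 => ![some 3, some 5, none, some 7, none, none, none, none]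
  | 4 => ![none, some 6, none, none, none, none, none, none]
  | 5 => ![none, some 7, none, none, none, none, none, none]
  | 6 => ![some 7, none, none, none, none, none, none, none]
  | _ => fun _ => none

/-- The matrix of `sqAct k`, acting on column vectors. -/
def sqMat (k : ℕ) : Matrix (Fin 8) (Fin 8) F2 :=
  Matrix.of fun i j => if sqAct k j = some i then 1 else 0

lemma sqMat_zero : sqMat 0 = 1 := by decide +kernel

lemma sqMat_large (k : ℕ) (hk : 7 ≤ k) : sqMat k = 0 := by
  obtain ⟨n, rfl⟩ := Nat.exists_eq_add_of_le' hk
  ext i j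
  simp [sqMat, sqAct]

/-- Composite operations of degree above the top degree `6` of the module vanish. -/
lemma sqMat_mul_large (a b : ℕ) (h : 7 ≤ a + b) : sqMat a * sqMat b = 0 := by
  by_cases ha : 7 ≤ a
  · rw [sqMat_large a ha, zero_mul]
  by_cases hb : 7 ≤ b
  · rw [sqMat_large b hb, mul_zero]
  have key : ∀ a b : Fin 7, 7 ≤ a.val + b.val → sqMat a * sqMat b = 0 := by decide +kernel
  exact key ⟨a, by omega⟩ ⟨b, by omega⟩ h

lemma sqMat_adem (a b : ℕ) (ha : 0 < a) (hab : a < 2 * b) :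
    sqMat a * sqMat b = ∑ c ∈ Finset.range (a / 2 + 1),
      ((Nat.choose (b - c - 1) (a - 2 * c) : F2)) • (sqMat (a + b - c) * sqMat c) := by
  by_cases h : 7 ≤ a + b
  · rw [sqMat_mul_large a b h, Finset.sum_eq_zero]
    intro c hc
    rw [Finset.mem_range] at hc
    rw [sqMat_mul_large _ _ (by omega), smul_zero]
  · have key : ∀ a b : Fin 7, 0 < a.val → a.val < 2 * b.val → a.val + b.val < 7 →
        sqMat a * sqMat b = ∑ c ∈ Finset.range (a.val / 2 + 1),
          ((Nat.choose (b - c - 1) (a - 2 * c) : F2)) • (sqMat (a + b - c) * sqMat c) := by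
      decide +kernel
    exact key ⟨a, by omega⟩ ⟨b, by omega⟩ ha hab (by simpa using h)

/-- The representation of the Steenrod algebra in which `Sq k` acts by `sqMat k`. -/
def steenrodRep : SteenrodAlgebra →ₐ[F2] Matrix (Fin 8) (Fin 8) F2 :=
  RingQuot.liftAlgHom F2 ⟨FreeAlgebra.lift F2 sqMat, by
    intro x y h
    cases h with
    | sq_zero => simp [preSq, sqMat_zero]
    | adem a b ha hab =>
      simpa only [preSq, map_mul, map_sum, map_smul, FreeAlgebra.lift_ι_apply]
        using sqMat_adem a b ha hab⟩

lemma steenrodRep_Sq (k : ℕ) : steenrodRep (Sq k) = sqMat k := by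
  simp [steenrodRep, Sq, preSq]

lemma Sq_zero : Sq 0 = 1 := by
  simpa [Sq] using RingQuot.mkAlgHom_rel F2 AdemRel.sq_zero

lemma Sq_adem (a b : ℕ) (ha : 0 < a) (hab : a < 2 * b) :
    Sq a * Sq b = ∑ c ∈ Finset.range (a / 2 + 1),
      ((Nat.choose (b - c - 1) (a - 2 * c) : F2)) • (Sq (a + b - c) * Sq c) := by
  simpa only [Sq, map_mul, map_sum, map_smul] using
    RingQuot.mkAlgHom_rel F2 (AdemRel.adem a b ha hab)

lemma Sq_one_one : Sq 1 * Sq 1 = 0 := by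
  rw [Sq_adem 1 1 (by norm_num) (by norm_num)]
  simp

lemma Sq_one_two : Sq 1 * Sq 2 = Sq 3 := by
  rw [Sq_adem 1 2 (by norm_num) (by norm_num)]
  simp [Sq_zero]

lemma Sq_two_two : Sq 2 * Sq 2 = Sq 1 * (Sq 2 * Sq 1) := by
  rw [Sq_adem 2 2 (by norm_num) (by norm_num), ← mul_assoc, Sq_one_two]
  simp [Finset.sum_range_succ]

/-- The eight words `∅, 1, 2, 12, 21, 121, 212, 1212` in `Sq 1` and `Sq 2`. -/
def sqWord : Fin 8 → SteenrodAlgebra :=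
  ![1, Sq 1, Sq 2, Sq 1 * Sq 2, Sq 2 * Sq 1, Sq 1 * (Sq 2 * Sq 1), Sq 2 * (Sq 1 * Sq 2),
    Sq 1 * (Sq 2 * (Sq 1 * Sq 2))]

lemma Sq_one_one_mul (x : SteenrodAlgebra) : Sq 1 * (Sq 1 * x) = 0 := by
  rw [← mul_assoc, Sq_one_one, zero_mul]

lemma Sq_two_two_mul (x : SteenrodAlgebra) :
    Sq 2 * (Sq 2 * x) = Sq 1 * (Sq 2 * (Sq 1 * x)) := by
  rw [← mul_assoc, Sq_two_two, mul_assoc, mul_assoc]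

/-- Both sides equal the cube of `Sq 2`. -/
lemma Sq_braid : Sq 2 * (Sq 1 * (Sq 2 * Sq 1)) = Sq 1 * (Sq 2 * (Sq 1 * Sq 2)) := by
  rw [← Sq_two_two, Sq_two_two_mul]

lemma sqWord_one_mul (i : Fin 8) : Sq 1 * sqWord i = (sqAct 1 i).elim 0 sqWord := by
  fin_cases i <;> simp [sqWord, sqAct, Sq_one_one, Sq_one_one_mul]

lemma sqWord_two_mul (i : Fin 8) : Sq 2 * sqWord i = (sqAct 2 i).elim 0 sqWord := by
  have h7 : Sq 2 * (Sq 1 * (Sq 2 * (Sq 1 * Sq 2))) = 0 := by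
    rw [← Sq_braid, Sq_two_two_mul, Sq_one_one_mul, mul_zero, mul_zero]
  fin_cases i <;> simp [sqWord, sqAct, Sq_one_one, Sq_one_one_mul, Sq_two_two, Sq_two_two_mul,
    Sq_braid, h7]

lemma span_sqWord_stable (s : SteenrodAlgebra) (k : ℕ)
    (hs : ∀ i, s * sqWord i = (sqAct k i).elim 0 sqWord) {y : SteenrodAlgebra}
    (hy : y ∈ Submodule.span F2 (Set.range sqWord)) :
    s * y ∈ Submodule.span F2 (Set.range sqWord) := by
  induction hy using Submodule.span_induction with
  | mem x hx =>
    obtain ⟨i, rfl⟩ := hx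
    rw [hs]
    cases sqAct k i with
    | none => exact Submodule.zero_mem _
    | some j => exact Submodule.subset_span ⟨j, rfl⟩
  | zero => simp
  | add x y _ _ hx hy => rw [mul_add]; exact Submodule.add_mem _ hx hy
  | smul c x _ hx => rw [mul_smul_comm]; exact Submodule.smul_mem _ c hx

lemma adjoin_eq_span_sqWord :
    Subalgebra.toSubmodule (Algebra.adjoin F2 ({Sq 1, Sq 2} : Set SteenrodAlgebra)) =
      Submodule.span F2 (Set.range sqWord) := by
  apply le_antisymm
  · -- Elements whose left multiplication preserves the span form a subalgebra containing the
    -- generators; multiplying by `1` then places the element itself in the span.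
    have key : ∀ x ∈ Algebra.adjoin F2 ({Sq 1, Sq 2} : Set SteenrodAlgebra),
        ∀ y ∈ Submodule.span F2 (Set.range sqWord),
          x * y ∈ Submodule.span F2 (Set.range sqWord) := by
      intro x hx
      induction hx using Algebra.adjoin_induction with
      | mem x hx =>
        intro y hy
        rcases hx with rfl | rfl
        · exact span_sqWord_stable _ 1 sqWord_one_mul hy
        · exact span_sqWord_stable _ 2 sqWord_two_mul hy
      | algebraMap r =>
        intro y hy
        rw [← Algebra.smul_def]
        exact Submodule.smul_mem _ r hy
      | add a b _ _ ha hb =>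
        intro y hy
        rw [add_mul]
        exact Submodule.add_mem _ (ha y hy) (hb y hy)
      | mul a b _ _ ha hb =>
        intro y hy
        rw [mul_assoc]
        exact ha _ (hb y hy)
    intro x hx
    simpa using key x hx 1 (Submodule.subset_span ⟨0, rfl⟩)
  · rw [Submodule.span_le]
    rintro _ ⟨i, rfl⟩
    have h1 : Sq 1 ∈ Algebra.adjoin F2 ({Sq 1, Sq 2} : Set SteenrodAlgebra) :=
      Algebra.subset_adjoin (by simp)
    have h2 : Sq 2 ∈ Algebra.adjoin F2 ({Sq 1, Sq 2} : Set SteenrodAlgebra) :=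
      Algebra.subset_adjoin (by simp)
    change sqWord i ∈ Algebra.adjoin F2 ({Sq 1, Sq 2} : Set SteenrodAlgebra)
    fin_cases i
    · exact one_mem _
    · exact h1
    · exact h2
    · exact mul_mem h1 h2
    · exact mul_mem h2 h1
    · exact mul_mem h1 (mul_mem h2 h1)
    · exact mul_mem h2 (mul_mem h1 h2)
    · exact mul_mem h1 (mul_mem h2 (mul_mem h1 h2))

/-- Each word sends the basis vector of index `0` to the basis vector indexed by that word. -/
lemma steenrodRep_sqWord (i : Fin 8) :
    (steenrodRep (sqWord i)).col 0 = Pi.single i 1 := by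
  have key : ∀ i, ((![1, sqMat 1, sqMat 2, sqMat 1 * sqMat 2, sqMat 2 * sqMat 1,
      sqMat 1 * (sqMat 2 * sqMat 1), sqMat 2 * (sqMat 1 * sqMat 2),
      sqMat 1 * (sqMat 2 * (sqMat 1 * sqMat 2))] : Fin 8 → Matrix (Fin 8) (Fin 8) F2) i).col 0
        = Pi.single i 1 := by
    decide +kernel
  rw [← key i]
  fin_cases i <;> simp [sqWord, steenrodRep_Sq]

lemma linearIndependent_sqWord : LinearIndependent F2 sqWord := by
  let φ : SteenrodAlgebra →ₗ[F2] (Fin 8 → F2) :=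
    { toFun := fun x => (steenrodRep x).col 0
      map_add' := fun x y => by ext; simp
      map_smul' := fun c x => by ext; simp }
  apply LinearIndependent.of_comp φ
  have h : φ ∘ sqWord = Pi.basisFun F2 (Fin 8) := by
    funext i
    rw [Function.comp_apply, Pi.basisFun_apply]
    exact steenrodRep_sqWord i
  rw [h]
  exact (Pi.basisFun F2 (Fin 8)).linearIndependent

/-- The subalgebra `A_1` of the mod-2 Steenrod algebra generated by `Sq^1` and `Sq^2`
is an 8-dimensional `ℤ/2`-vector space. -/
theorem rank_A1_eq_eight :
    Module.rank F2 (Algebra.adjoin F2 ({Sq 1, Sq 2} : Set SteenrodAlgebra)) = 8 := by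
  rw [← Subalgebra.rank_toSubmodule, adjoin_eq_span_sqWord,
    rank_span linearIndependent_sqWord,
    Cardinal.mk_range_eq _ linearIndependent_sqWord.injective]
  simp

end
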